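/- (Bernstein-type inequality for complex Gaussian quadratic forms) Let M ≥ 1, let Y ∈ ℂ^{M×M} be Hermitian and u ∈ ℂ^M. Let x be a random vector in ℂ^M whose 2M real coordinates (the real and imaginary parts of each of the M complex entries) are independent real Gaussian random variables, each with mean 0 and variance 1/2 (i.e., x ~ CN(0, I_M)). Define f(x) = x^H Y x + 2 Re(x^H u), a real-valued random variable. Then for every δ > 0, Pr( f(x) ≥ Tr(Y) − √(2δ)·√(‖Y‖_F^2 + 2‖u‖^2) − δ·s⁺(−Y) ) ≥ 1 − e^{−δ}, where s⁺(Z) = max{λ_max(Z), 0} and λ_max denotes the largest eigenvalue of a Hermitian matrix. -/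

import Mathlib

open Matrix BigOperators MeasureTheory ProbabilityTheory
open scoped ENNReal NNReal

noncomputable section

/-- The Euclidean norm of a vector in `ℂ^M`. -/
def enorm' {M : ℕ} (v : Fin M → ℂ) : ℝ :=
  Real.sqrt (∑ i, ‖v i‖ ^ 2)

/-- The Frobenius norm of a complex matrix. -/
def fnorm {M : ℕ} (A : Matrix (Fin M) (Fin M) ℂ) : ℝ :=
  Real.sqrt (∑ i, ∑ j, ‖A i j‖ ^ 2)

/-- The largest eigenvalue of a Hermitian matrix. -/
def lamMax {M : ℕ} {Z : Matrix (Fin M) (Fin M) ℂ} (hZ : Z.IsHermitian) : ℝ :=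
  ⨆ i, hZ.eigenvalues i

/-- The distribution of a standard circularly symmetric complex Gaussian vector
`x ~ CN(0, I_M)`: each complex coordinate is represented by a pair of independent real
Gaussian coordinates (its real and imaginary parts), each with mean `0` and
variance `1/2`. -/
def stdComplexGaussian (M : ℕ) : Measure (Fin M → ℝ × ℝ) :=
  Measure.pi fun _ : Fin M => (gaussianReal 0 (1 / 2)).prod (gaussianReal 0 (1 / 2))

/-- Reassemble the complex vector from its real and imaginary coordinates. -/
def toC {M : ℕ} (w : Fin M → ℝ × ℝ) : Fin M → ℂ :=
  fun i => Complex.mk (w i).1 (w i).2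

/-- one complex gaussian coordinate -/
def cG : Measure ℂ :=
  ((gaussianReal 0 (1 / 2)).prod (gaussianReal 0 (1 / 2))).map (fun p : ℝ × ℝ => Complex.mk p.1 p.2)

lemma meas_mk : Measurable (fun p : ℝ × ℝ => Complex.mk p.1 p.2) :=
  Complex.measurableEquivRealProd.symm.measurable

instance : IsProbabilityMeasure cG := Measure.isProbabilityMeasure_map meas_mk.aemeasurable

lemma map_toC (M : ℕ) : (stdComplexGaussian M).map toC = Measure.pi (fun _ : Fin M => cG) := by
  have : IsProbabilityMeasure (((gaussianReal 0 (1 / 2)).prod (gaussianReal 0 (1 / 2))).map (fun p : ℝ × ℝ => Complex.mk p.1 p.2)) := Measure.isProbabilityMeasure_map meas_mk.aemeasurable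
  exact Measure.pi_map_pi (μ := fun _ : Fin M => (gaussianReal 0 (1 / 2)).prod (gaussianReal 0 (1 / 2)))
    (f := fun _ p => Complex.mk p.1 p.2) (fun _ => meas_mk.aemeasurable)

lemma charFun_cG (t : ℂ) : charFun cG t = Complex.exp (-(‖t‖ ^ 2 / 4 : ℝ)) := by
  rw [charFun_apply, cG, integral_map meas_mk.aemeasurable (by fun_prop)]
  have h : ∀ p : ℝ × ℝ, Complex.exp ((inner ℝ (Complex.mk p.1 p.2) t : ℝ) * Complex.I)
      = Complex.exp (t.re * p.1 * Complex.I) * Complex.exp (t.im * p.2 * Complex.I) := by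
    intro p
    rw [← Complex.exp_add, Complex.inner]
    simp
    ring_nf
  simp_rw [h]
  rw [integral_prod_mul (fun x : ℝ => Complex.exp (t.re * x * Complex.I)) (fun x : ℝ => Complex.exp (t.im * x * Complex.I)), ← charFun_apply_real, ← charFun_apply_real, charFun_gaussianReal, charFun_gaussianReal,
    ← Complex.exp_add, ← Complex.normSq_eq_norm_sq, Complex.normSq_apply]
  congr 1
  push_cast
  simp
  ring

lemma dot_adj {M : ℕ} (W : Matrix (Fin M) (Fin M) ℂ) (x y : Fin M → ℂ) :
    star (W *ᵥ x) ⬝ᵥ y = star x ⬝ᵥ (Wᴴ *ᵥ y) := by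
  rw [star_mulVec, dotProduct_mulVec]

lemma sum_norm_sq {M : ℕ} (x : Fin M → ℂ) : ((∑ i, ‖x i‖ ^ 2 : ℝ) : ℂ) = star x ⬝ᵥ x := by
  simp [dotProduct, ← Complex.normSq_eq_norm_sq, Complex.normSq_eq_conj_mul_self]

lemma sum_norm_sq_unitary {M : ℕ} (W : Matrix (Fin M) (Fin M) ℂ) (hW : Wᴴ * W = 1) (x : Fin M → ℂ) :
    ∑ i, ‖(W *ᵥ x) i‖ ^ 2 = ∑ i, ‖x i‖ ^ 2 := by
  have : ((∑ i, ‖(W *ᵥ x) i‖ ^ 2 : ℝ) : ℂ) = ((∑ i, ‖x i‖ ^ 2 : ℝ) : ℂ) := by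
    rw [sum_norm_sq, sum_norm_sq, dot_adj, mulVec_mulVec, hW, one_mulVec]
  exact_mod_cast this

lemma inner_eq {M : ℕ} (x y : Fin M → ℂ) :
    (inner ℝ (WithLp.toLp 2 x : PiLp 2 (fun _ : Fin M => ℂ)) (WithLp.toLp 2 y)) = (star x ⬝ᵥ y).re := by
  simp only [PiLp.inner_apply, dotProduct, Complex.inner, Complex.re_sum]
  refine Finset.sum_congr rfl fun i _ => ?_
  simp
  ring

lemma meas_mulVec {M : ℕ} (W : Matrix (Fin M) (Fin M) ℂ) : Measurable (fun x : Fin M → ℂ => W *ᵥ x) :=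
  (Continuous.matrix_mulVec continuous_const continuous_id).measurable

lemma pi_cG_unitary {M : ℕ} (W : Matrix (Fin M) (Fin M) ℂ) (hW : W * Wᴴ = 1) :
    (Measure.pi (fun _ : Fin M => cG)).map (fun x => W *ᵥ x) = Measure.pi (fun _ : Fin M => cG) := by
  have : IsProbabilityMeasure ((Measure.pi (fun _ : Fin M => cG)).map (fun x => W *ᵥ x)) :=
    Measure.isProbabilityMeasure_map (meas_mulVec W).aemeasurable
  refine charFun_eq_pi_iff.1 fun t => ?_
  have h1 := charFun_pi (μ := fun _ : Fin M => cG) (WithLp.toLp 2 (Wᴴ *ᵥ t.ofLp))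
  have hm : Measurable (WithLp.toLp 2 : (Fin M → ℂ) → PiLp 2 (fun _ : Fin M => ℂ)) :=
    (MeasurableEquiv.toLp 2 (Fin M → ℂ)).measurable
  have h2 : charFun (((Measure.pi (fun _ : Fin M => cG)).map (fun x => W *ᵥ x)).map (WithLp.toLp 2)) t
      = charFun ((Measure.pi (fun _ : Fin M => cG)).map (WithLp.toLp 2)) (WithLp.toLp 2 (Wᴴ *ᵥ t.ofLp)) := by
    rw [Measure.map_map hm (meas_mulVec W), charFun_apply, charFun_apply,
      integral_map (hm.comp (meas_mulVec W)).aemeasurable (by fun_prop),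
      integral_map hm.aemeasurable (by fun_prop)]
    congr 1
    ext x
    congr 3
    have := inner_eq (W *ᵥ x) t.ofLp
    rw [dot_adj, ← inner_eq] at this
    exact this
  rw [h2, h1]
  simp_rw [charFun_cG]
  rw [← Complex.exp_sum, ← Complex.exp_sum]
  congr 1
  have := sum_norm_sq_unitary Wᴴ (by simpa using hW) t.ofLp
  simp only [Finset.sum_neg_distrib, ← Complex.ofReal_sum, ← Finset.sum_div]
  rw [← this]

lemma gauss_pt {a : ℝ} (ha : a < 1) (b : ℝ) (x : ℝ) :
    gaussianPDFReal 0 (1 / 2) x * Real.exp (a * x ^ 2 + b * x) =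
    ((Real.sqrt (1 - a))⁻¹ * Real.exp (b ^ 2 / (4 * (1 - a)))) *
      gaussianPDFReal (b / (2 * (1 - a))) (Real.toNNReal (1 / (2 * (1 - a)))) x := by
  have h : 0 < 1 - a := by linarith
  have hv : ((Real.toNNReal (1 / (2 * (1 - a))) : ℝ≥0) : ℝ) = 1 / (2 * (1 - a)) :=
    Real.coe_toNNReal _ (by positivity)
  have h1 : Real.sqrt (2 * Real.pi * (1 / (2 * (1 - a)))) = Real.sqrt Real.pi / Real.sqrt (1 - a) := by
    rw [← Real.sqrt_div Real.pi_pos.le]; congr 1; field_simp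
  have h2 : Real.sqrt (2 * Real.pi * (1 / 2)) = Real.sqrt Real.pi := by congr 1; ring
  rw [gaussianPDFReal, gaussianPDFReal, hv, h1]
  push_cast
  rw [h2, mul_assoc, ← Real.exp_add]
  have hs : Real.sqrt (1 - a) ≠ 0 := (Real.sqrt_pos.2 h).ne'
  have hp : Real.sqrt Real.pi ≠ 0 := (Real.sqrt_pos.2 Real.pi_pos).ne'
  have : ∀ c d e f : ℝ, c * d * (e * f) = c * e * (d * f) := by intros; ring
  rw [this, ← Real.exp_add]
  congr 1
  · field_simp
  · congr 1
    field_simp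
    ring

lemma gauss_int {a : ℝ} (ha : a < 1) (b : ℝ) :
    Integrable (fun x => Real.exp (a * x ^ 2 + b * x)) (gaussianReal 0 (1 / 2)) ∧
    ∫ x, Real.exp (a * x ^ 2 + b * x) ∂(gaussianReal 0 (1 / 2)) =
      (Real.sqrt (1 - a))⁻¹ * Real.exp (b ^ 2 / (4 * (1 - a))) := by
  have h : 0 < 1 - a := by linarith
  have hv : (Real.toNNReal (1 / (2 * (1 - a)))) ≠ 0 := by
    simpa using ha
  constructor
  · rw [gaussianReal_of_var_ne_zero _ (by norm_num), integrable_withDensity_iff_integrable_smul' (measurable_gaussianPDF _ _) (by simp [gaussianPDF])]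
    simp only [toReal_gaussianPDF, smul_eq_mul, gauss_pt ha]
    exact (integrable_gaussianPDFReal _ _).const_mul _
  · rw [integral_gaussianReal_eq_integral_smul (by norm_num)]
    simp only [smul_eq_mul, gauss_pt ha]
    rw [integral_const_mul, integral_gaussianPDFReal_eq_one _ hv, mul_one]

lemma cG_mgf {t m : ℝ} (h : t * m < 1) (v : ℂ) :
    Integrable (fun z : ℂ => Real.exp (t * (m * (‖z‖ ^ 2 - 1) - 2 * (star z * v).re))) cG ∧
    ∫ z : ℂ, Real.exp (t * (m * (‖z‖ ^ 2 - 1) - 2 * (star z * v).re)) ∂cG =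
      Real.exp (-(t * m)) * ((1 - t * m)⁻¹ * Real.exp (t ^ 2 * ‖v‖ ^ 2 / (1 - t * m))) := by
  have key : ∀ p : ℝ × ℝ, Real.exp (t * (m * (‖Complex.mk p.1 p.2‖ ^ 2 - 1) - 2 * (star (Complex.mk p.1 p.2) * v).re))
      = Real.exp (-(t * m)) * (Real.exp (t * m * p.1 ^ 2 + (-2 * t * v.re) * p.1) *
        Real.exp (t * m * p.2 ^ 2 + (-2 * t * v.im) * p.2)) := by
    intro p
    rw [← Real.exp_add, ← Real.exp_add, ← Complex.normSq_eq_norm_sq, Complex.normSq_apply]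
    congr 1
    simp
    ring
  have h1 := gauss_int h (-2 * t * v.re)
  have h2 := gauss_int h (-2 * t * v.im)
  have hc : Continuous (fun z : ℂ => Real.exp (t * (m * (‖z‖ ^ 2 - 1) - 2 * (star z * v).re))) := by
    fun_prop
  constructor
  · rw [cG, integrable_map_measure hc.aestronglyMeasurable meas_mk.aemeasurable]
    simp only [Function.comp_def, key]
    exact (h1.1.mul_prod h2.1).const_mul _
  · rw [cG, integral_map meas_mk.aemeasurable hc.aestronglyMeasurable]
    simp only [key]
    rw [integral_const_mul, integral_prod_mul (fun x : ℝ => Real.exp (t * m * x ^ 2 + (-2 * t * v.re) * x))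
      (fun x : ℝ => Real.exp (t * m * x ^ 2 + (-2 * t * v.im) * x)), h1.2, h2.2]
    have hp : 0 < 1 - t * m := by linarith
    congr 1
    have : ∀ c d e f : ℝ, c * d * (e * f) = c * e * (d * f) := by intros; ring
    rw [this, ← Real.exp_add, ← mul_inv, Real.mul_self_sqrt hp.le, ← Complex.normSq_eq_norm_sq, Complex.normSq_apply]
    congr 2
    field_simp
    ring

lemma scalar_bound {a c : ℝ} (hac : a ≤ c) (hc0 : 0 ≤ c) (hc : c < 1) :
    -a - Real.log (1 - a) ≤ a ^ 2 / (2 * (1 - c)) := by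
  rcases le_total 0 a with ha | ha
  · have h1 : 0 < 1 - a := by linarith
    have h2 : a ^ 2 / (2 * (1 - a)) ≤ a ^ 2 / (2 * (1 - c)) := by
      apply div_le_div_of_nonneg_left (by positivity) (by linarith) (by linarith)
    refine le_trans ?_ h2
    have hw : 0 ≤ -Real.log (1 - a) := by
      have := Real.log_nonpos h1.le (by linarith); linarith
    have := Real.self_le_sinh_iff.2 hw
    rw [Real.sinh_eq, neg_neg, Real.exp_neg, Real.exp_log h1] at this
    have e : ((1 - a)⁻¹ - (1 - a)) / 2 = a + a ^ 2 / (2 * (1 - a)) := by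
      field_simp
      ring
    linarith
  · have h2 : a ^ 2 / 2 ≤ a ^ 2 / (2 * (1 - c)) := by
      apply div_le_div_of_nonneg_left (by positivity) (by linarith) (by linarith)
    refine le_trans ?_ h2
    have := Real.le_log_one_add_of_nonneg (x := -a) (by linarith)
    have h3 : -a - a ^ 2 / 2 ≤ 2 * (-a) / (-a + 2) := by
      rw [le_div_iff₀ (by linarith)]
      nlinarith [pow_nonneg (neg_nonneg.2 ha) 3]
    rw [← sub_eq_add_neg] at this
    linarith

lemma cG_mgf_bound {t m s : ℝ} (ht : 0 ≤ t) (hms : m ≤ s) (hs : 0 ≤ s) (hts : t * s < 1) (v : ℂ) :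
    ∫ z : ℂ, Real.exp (t * (m * (‖z‖ ^ 2 - 1) - 2 * (star z * v).re)) ∂cG ≤
      Real.exp (t ^ 2 / (2 * (1 - t * s)) * (m ^ 2 + 2 * ‖v‖ ^ 2)) := by
  have hle : t * m ≤ t * s := mul_le_mul_of_nonneg_left hms ht
  have h1 : 0 < 1 - t * m := by linarith
  rw [(cG_mgf (by linarith) v).2]
  have e : (1 - t * m)⁻¹ = Real.exp (- Real.log (1 - t * m)) := by
    rw [Real.exp_neg, Real.exp_log h1]
  rw [e, ← Real.exp_add, ← Real.exp_add, Real.exp_le_exp]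
  have a1 := scalar_bound hle (by positivity) hts
  have a2 : t ^ 2 * ‖v‖ ^ 2 / (1 - t * m) ≤ t ^ 2 * ‖v‖ ^ 2 / (1 - t * s) :=
    div_le_div_of_nonneg_left (by positivity) (by linarith) (by linarith)
  have e2 : t ^ 2 / (2 * (1 - t * s)) * (m ^ 2 + 2 * ‖v‖ ^ 2) =
      (t * m) ^ 2 / (2 * (1 - t * s)) + t ^ 2 * ‖v‖ ^ 2 / (1 - t * s) := by
    have : 1 - t * s ≠ 0 := by linarith
    field_simp
  linarith

/-- centred diagonal form -/
def Xf {M : ℕ} (m : Fin M → ℝ) (v : Fin M → ℂ) (z : Fin M → ℂ) : ℝ :=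
  ∑ i, (m i * (‖z i‖ ^ 2 - 1) - 2 * (star (z i) * v i).re)

lemma tail_bound {M : ℕ} (m : Fin M → ℝ) (v : Fin M → ℂ) (s δ V : ℝ) (hs : 0 ≤ s) (hms : ∀ i, m i ≤ s)
    (hδ : 0 < δ) (hV : V = ∑ i, (m i ^ 2 + 2 * ‖v i‖ ^ 2)) (hV0 : 0 < V) :
    (Measure.pi (fun _ : Fin M => cG)).real {z | Real.sqrt (2 * δ) * Real.sqrt V + δ * s ≤ Xf m v z}
      ≤ Real.exp (-δ) := by
  obtain ⟨r, hr⟩ : ∃ r, r = Real.sqrt (2 * δ) / Real.sqrt V := ⟨_, rfl⟩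
  have hVs : 0 < Real.sqrt V := Real.sqrt_pos.2 hV0
  have hδs : 0 < Real.sqrt (2 * δ) := Real.sqrt_pos.2 (by linarith)
  have hr0 : 0 < r := by rw [hr]; positivity
  have hrV : Real.sqrt (2 * δ) * Real.sqrt V = r * V := by
    rw [hr]; nth_rw 3 [← Real.mul_self_sqrt hV0.le]; field_simp
  have hr2 : r ^ 2 * V = 2 * δ := by
    rw [hr, div_pow, Real.sq_sqrt (by linarith), Real.sq_sqrt hV0.le]; field_simp
  have hd : 0 < 1 + s * r := by positivity
  obtain ⟨t, ht⟩ : ∃ t, t = r / (1 + s * r) := ⟨_, rfl⟩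
  have ht0 : 0 < t := by rw [ht]; positivity
  have hts' : 1 - t * s = 1 / (1 + s * r) := by rw [ht]; field_simp; ring
  have hts : t * s < 1 := by
    have : 0 < 1 - t * s := by rw [hts']; positivity
    linarith
  have hexp : ∀ z : Fin M → ℂ, Real.exp (t * Xf m v z) =
      ∏ i, Real.exp (t * (m i * (‖z i‖ ^ 2 - 1) - 2 * (star (z i) * v i).re)) := by
    intro z; rw [← Real.exp_sum, Xf, Finset.mul_sum]
  have hlt : ∀ i, t * m i < 1 := fun i => lt_of_le_of_lt (mul_le_mul_of_nonneg_left (hms i) ht0.le) hts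
  have hint : Integrable (fun z => Real.exp (t * Xf m v z)) (Measure.pi (fun _ : Fin M => cG)) := by
    simp only [hexp]
    exact Integrable.fintype_prod (f := fun i z => Real.exp (t * (m i * (‖z‖ ^ 2 - 1) - 2 * (star z * v i).re)))
      (fun i => (cG_mgf (hlt i) (v i)).1)
  have hmgf : mgf (Xf m v) (Measure.pi (fun _ : Fin M => cG)) t ≤ Real.exp (t ^ 2 / (2 * (1 - t * s)) * V) := by
    rw [mgf]
    simp only [hexp]
    rw [integral_fintype_prod_eq_prod (fun i z => Real.exp (t * (m i * (‖z‖ ^ 2 - 1) - 2 * (star z * v i).re))),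
      hV, Finset.mul_sum, Real.exp_sum]
    exact Finset.prod_le_prod (fun i _ => integral_nonneg fun _ => (Real.exp_pos _).le)
      (fun i _ => cG_mgf_bound ht0.le (hms i) hs hts (v i))
  refine (measure_ge_le_exp_mul_mgf _ ht0.le hint).trans ?_
  refine (mul_le_mul_of_nonneg_left hmgf (Real.exp_pos _).le).trans ?_
  rw [← Real.exp_add, Real.exp_le_exp, hrV, hts', ht]
  have : V = 2 * δ / r ^ 2 := by field_simp; linarith
  rw [this]
  apply le_of_eq
  field_simp
  ring

/-- Bernstein-type inequality for complex Gaussian quadratic forms (Lemma 2 of the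
paper): for `x ~ CN(0, I_M)` and `f(x) = xᴴ Y x + 2 Re(xᴴ u)`,
`Pr(f(x) ≥ Tr Y − √(2δ)·√(‖Y‖_F² + 2‖u‖²) − δ·s⁺(−Y)) ≥ 1 − e^{−δ}`. -/
theorem bernstein_type_inequality (M : ℕ) (hM : 1 ≤ M)
    (Y : Matrix (Fin M) (Fin M) ℂ) (hY : Y.IsHermitian) (u : Fin M → ℂ)
    (δ : ℝ) (hδ : 0 < δ) :
    ENNReal.ofReal (1 - Real.exp (-δ)) ≤
      stdComplexGaussian M
        {w : Fin M → ℝ × ℝ |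
          Y.trace.re - Real.sqrt (2 * δ) * Real.sqrt (fnorm Y ^ 2 + 2 * enorm' u ^ 2)
              - δ * max (lamMax hY.neg) 0 ≤
            (star (toC w) ⬝ᵥ Y.mulVec (toC w)).re + 2 * (star (toC w) ⬝ᵥ u).re} := by
  obtain ⟨U, hU⟩ : ∃ U : Matrix (Fin M) (Fin M) ℂ, U = hY.neg.eigenvectorUnitary := ⟨_, rfl⟩
  obtain ⟨m, hm⟩ : ∃ m : Fin M → ℝ, m = hY.neg.eigenvalues := ⟨_, rfl⟩
  obtain ⟨s, hs⟩ : ∃ s : ℝ, s = max (lamMax hY.neg) 0 := ⟨_, rfl⟩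
  have hUU : Uᴴ * U = 1 := by
    rw [hU]; exact Unitary.coe_star_mul_self hY.neg.eigenvectorUnitary
  have hUU' : U * Uᴴ = 1 := by
    rw [hU]; exact Unitary.coe_mul_star_self hY.neg.eigenvectorUnitary
  have hms : ∀ i, m i ≤ s := by
    intro i
    rw [hs, hm]
    exact le_max_of_le_left (le_ciSup (Set.finite_range hY.neg.eigenvalues).bddAbove i)
  have hs0 : 0 ≤ s := hs ▸ le_max_right _ _
  have hspec : -Y = U * diagonal (fun i => (m i : ℂ)) * Uᴴ := by
    have := hY.neg.spectral_theorem
    rw [Unitary.conjStarAlgAut_apply] at this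
    rw [hU, hm]
    exact this
  have hYs : Y = -(U * diagonal (fun i => (m i : ℂ)) * Uᴴ) := by rw [← hspec, neg_neg]
  have htr : Y.trace.re = - ∑ i, m i := by
    rw [hYs, trace_neg, mul_assoc, trace_mul_comm, mul_assoc, hUU, mul_one, trace_diagonal]
    simp
  have hfr : fnorm Y ^ 2 = ∑ i, m i ^ 2 := by
    rw [fnorm, Real.sq_sqrt (by positivity)]
    have h1 : ((∑ i, ∑ j, ‖Y i j‖ ^ 2 : ℝ) : ℂ) = (Y * Yᴴ).trace := by
      simp [trace, Matrix.mul_apply, ← Complex.normSq_eq_norm_sq, Complex.normSq_eq_conj_mul_self, mul_comm]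
    have h2 : (Y * Yᴴ).trace = ((∑ i, m i ^ 2 : ℝ) : ℂ) := by
      rw [hY.eq]
      have : Y * Y = U * (diagonal (fun i => (m i : ℂ)) * diagonal (fun i => (m i : ℂ))) * Uᴴ := by
        rw [hYs]
        calc _ = U * diagonal (fun i => (m i : ℂ)) * (Uᴴ * U) * diagonal (fun i => (m i : ℂ)) * Uᴴ := by
              noncomm_ring
          _ = _ := by rw [hUU]; noncomm_ring
      rw [this, mul_assoc, trace_mul_comm, mul_assoc, hUU, mul_one, diagonal_mul_diagonal, trace_diagonal]
      simp [sq]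
    exact_mod_cast h1.trans h2
  obtain ⟨v, hv⟩ : ∃ v : Fin M → ℂ, v = Uᴴ *ᵥ u := ⟨_, rfl⟩
  have hen : enorm' u ^ 2 = ∑ i, ‖v i‖ ^ 2 := by
    rw [enorm', Real.sq_sqrt (by positivity), hv, sum_norm_sq_unitary Uᴴ (by simpa using hUU')]
  obtain ⟨V, hV⟩ : ∃ V : ℝ, V = ∑ i, (m i ^ 2 + 2 * ‖v i‖ ^ 2) := ⟨_, rfl⟩
  have hVV : fnorm Y ^ 2 + 2 * enorm' u ^ 2 = V := by
    rw [hfr, hen, hV, Finset.sum_add_distrib, Finset.mul_sum]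
  have hF : ∀ z : Fin M → ℂ, (star (U *ᵥ z) ⬝ᵥ Y.mulVec (U *ᵥ z)).re + 2 * (star (U *ᵥ z) ⬝ᵥ u).re
      = Y.trace.re - Xf m v z := by
    intro z
    have h1 : Uᴴ *ᵥ (Y *ᵥ (U *ᵥ z)) = -(diagonal (fun i => (m i : ℂ)) *ᵥ z) := by
      rw [mulVec_mulVec, mulVec_mulVec, hYs, ← neg_mulVec]
      congr 1
      calc _ = -((Uᴴ * U) * diagonal (fun i => (m i : ℂ)) * (Uᴴ * U)) := by noncomm_ring
        _ = _ := by rw [hUU]; noncomm_ring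
    rw [dot_adj, dot_adj, h1, ← hv, htr, Xf]
    simp only [dotProduct, Complex.re_sum, Finset.mul_sum]
    rw [← Finset.sum_add_distrib, ← Finset.sum_neg_distrib, ← Finset.sum_sub_distrib]
    refine Finset.sum_congr rfl fun i _ => ?_
    rw [← Complex.normSq_eq_norm_sq, Complex.normSq_apply]
    simp [mulVec_diagonal]
    ring
  rw [hVV, ← hs]
  have htoC : Measurable (toC : (Fin M → ℝ × ℝ) → Fin M → ℂ) :=
    measurable_pi_lambda _ fun i => meas_mk.comp (measurable_pi_apply i)
  have hcont : Continuous fun x : Fin M → ℂ => (star x ⬝ᵥ Y.mulVec x).re + 2 * (star x ⬝ᵥ u).re := by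
    have h1 : Continuous fun x : Fin M → ℂ => Y *ᵥ x := Continuous.matrix_mulVec continuous_const continuous_id
    have h2 : Continuous fun x : Fin M → ℂ => star x ⬝ᵥ Y.mulVec x := continuous_star.dotProduct h1
    have h3 : Continuous fun x : Fin M → ℂ => star x ⬝ᵥ u := continuous_star.dotProduct continuous_const
    exact (Complex.continuous_re.comp h2).add (continuous_const.mul (Complex.continuous_re.comp h3))
  have hA : MeasurableSet {x : Fin M → ℂ | Y.trace.re - Real.sqrt (2 * δ) * Real.sqrt V - δ * s ≤
      (star x ⬝ᵥ Y.mulVec x).re + 2 * (star x ⬝ᵥ u).re} :=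
    measurableSet_le measurable_const hcont.measurable
  have e1 := Measure.map_apply (μ := stdComplexGaussian M) htoC hA
  rw [map_toC, ← pi_cG_unitary U hUU', Measure.map_apply (meas_mulVec U) hA] at e1
  have hB := meas_mulVec U hA
  simp only [Set.preimage_ofPred_eq, hF] at e1 hB
  rw [← e1]
  rcases eq_or_lt_of_le (show 0 ≤ V by rw [hV]; positivity) with h0 | h0
  · have hz : ∀ i, m i ^ 2 + 2 * ‖v i‖ ^ 2 = 0 := by
      intro i
      rw [hV] at h0
      exact (Finset.sum_eq_zero_iff_of_nonneg (fun i _ => by positivity)).1 h0.symm i (Finset.mem_univ i)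
    have hX : ∀ z, Xf m v z = 0 := by
      intro z
      refine Finset.sum_eq_zero fun i _ => ?_
      have h1 : m i = 0 := by nlinarith [hz i, sq_nonneg (m i), sq_nonneg ‖v i‖]
      have h2 : v i = 0 := by
        have : ‖v i‖ = 0 := by nlinarith [hz i, sq_nonneg (m i), sq_nonneg ‖v i‖]
        simpa using this
      simp [h1, h2]
    have : {z : Fin M → ℂ | Y.trace.re - Real.sqrt (2 * δ) * Real.sqrt V - δ * s ≤ Y.trace.re - Xf m v z}
        = Set.univ := by
      ext z
      simp only [Set.mem_ofPred_eq, Set.mem_univ, iff_true, hX]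
      have : 0 ≤ Real.sqrt (2 * δ) * Real.sqrt V + δ * s := by positivity
      linarith
    rw [this, measure_univ]
    have : 1 - Real.exp (-δ) ≤ 1 := by linarith [Real.exp_pos (-δ)]
    simpa using this
  · have hb := tail_bound m v s δ V hs0 hms hδ hV h0
    rw [← ofReal_measureReal]
    apply ENNReal.ofReal_le_ofReal
    have hc := probReal_add_probReal_compl (μ := Measure.pi (fun _ : Fin M => cG)) hB
    have hsub : (Measure.pi (fun _ : Fin M => cG)).real
        {z : Fin M → ℂ | Y.trace.re - Real.sqrt (2 * δ) * Real.sqrt V - δ * s ≤ Y.trace.re - Xf m v z}ᶜ ≤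
        (Measure.pi (fun _ : Fin M => cG)).real {z | Real.sqrt (2 * δ) * Real.sqrt V + δ * s ≤ Xf m v z} := by
      refine measureReal_mono ?_ (measure_ne_top _ _)
      intro z hz
      simp only [Set.mem_compl_iff, Set.mem_ofPred_eq, not_le] at hz ⊢
      linarith
    linarith
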